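/- arXiv:0905.1205 — 4 statements merged into one kernel-verified Lean document; each statement's English description precedes it below -/
import Mathlib

section
/- Let G be a finite group and let H be a maximal proper subgroup of G which is cyclic. Then for every x ∈ G with x ∉ H, the intersection H ∩ x⁻¹Hx is a normal subgroup of G. (Step in the proof of Theorem 5.11.) -/
/-!
The conjugate `K = x⁻¹Hx` is again a maximal subgroup. If `K = H`, then `x` normalizes `H`, so the
normalizer of `H` strictly contains `H` and is the whole group. If `K ≠ H`, then `H` and `K`
generate the group; both are abelian, so both centralize `H ⊓ K`, which is therefore central.
-/

open Subgroup

section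

variable {G : Type*} [Group G] {H K : Subgroup G}

theorem normal_of_le_center (hH : H ≤ center G) : H.Normal where
  conj_mem h hh g := by rwa [mem_center_iff.mp (hH hh) g, mul_inv_cancel_right]

theorem sup_le_centralizer_inf [IsMulCommutative H] [IsMulCommutative K] :
    H ⊔ K ≤ centralizer (H ⊓ K : Subgroup G) :=
  sup_le (H.le_centralizer.trans (centralizer_le inf_le_left))
    (K.le_centralizer.trans (centralizer_le inf_le_right))

theorem inf_le_center_of_sup_eq_top [IsMulCommutative H] [IsMulCommutative K] (h : H ⊔ K = ⊤) :
    H ⊓ K ≤ center G :=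
  centralizer_eq_top_iff_subset.mp (top_le_iff.mp (h.ge.trans sup_le_centralizer_inf))

theorem normal_of_isCoatom_of_mem_normalizer (hH : IsCoatom H) {x : G}
    (hx : x ∈ normalizer (H : Set G)) (hxH : x ∉ H) : H.Normal :=
  have hlt : H < normalizer (H : Set G) :=
    SetLike.lt_iff_le_and_exists.mpr ⟨le_normalizer, x, hx, hxH⟩
  normalizer_eq_top_iff.mp (hH.lt_iff.mp hlt)

theorem frobenius_step_normal_general (hmax : IsCoatom H) [IsMulCommutative H] {x : G}
    (hx : x ∉ H) : (H ⊓ H.map (MulAut.conj x⁻¹).toMonoidHom).Normal := by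
  by_cases hconj : H.map (MulAut.conj x⁻¹).toMonoidHom = H
  · have hx_normalizer : x⁻¹ ∈ normalizer (H : Set G) := mem_normalizer_iff_map_conj_eq.mpr hconj
    rw [hconj, inf_idem]
    exact normal_of_isCoatom_of_mem_normalizer hmax (inv_mem_iff.mp hx_normalizer) hx
  · have hconj_max : IsCoatom (H.map (MulAut.conj x⁻¹).toMonoidHom) :=
      ((MulAut.conj x⁻¹).mapSubgroup.isCoatom_iff H).mpr hmax
    have hsup : H ⊔ H.map (MulAut.conj x⁻¹).toMonoidHom = ⊤ :=
      hmax.sup_eq_top_of_ne hconj_max (Ne.symm hconj)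
    exact normal_of_le_center (inf_le_center_of_sup_eq_top hsup)

end

/-- Let `G` be a finite group and `H` a maximal proper subgroup of `G` which is cyclic.
Then for every `x ∈ G` with `x ∉ H`, the intersection `H ⊓ x⁻¹Hx` is a normal subgroup
of `G`. -/
theorem frobenius_step_normal {G : Type*} [Group G] [Finite G] (H : Subgroup G)
    (hmax : IsCoatom H) (hcyc : IsCyclic H) (x : G) (hx : x ∉ H) :
    (H ⊓ Subgroup.map ((MulAut.conj x⁻¹).toMonoidHom) H).Normal :=
  frobenius_step_normal_general hmax hx
end

section
/- Let G be a finite simple group such that every proper subgroup of G is cyclic. Then G is commutative; equivalently, G is cyclic of prime order, i.e. there is a prime number p with |G| = p. (Group-theoretic conclusion of the proof of Theorem 5.11: there is no non-commutative finite simple group all of whose proper subgroups are cyclic.) -/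
/-!
A group whose proper Sylow subgroups are all cyclic is either a `p`-group or a Z-group. In the
finite case `p`-groups are nilpotent, and Z-groups are solvable by Burnside's transfer theorem.
A solvable simple group is commutative, hence of prime order.
-/

section SylowCyclic

variable {G : Type*} [Group G]

theorem isPGroup_of_sylow_eq_top {p : ℕ} {P : Sylow p G} (hP : (P : Subgroup G) = ⊤) :
    IsPGroup p G := by
  have htop : IsPGroup p (⊤ : Subgroup G) := hP ▸ P.isPGroup'
  exact htop.of_equiv Subgroup.topEquiv

theorem exists_isPGroup_or_isZGroup_of_proper_sylow_cyclic
    (hcyc : ∀ p : ℕ, p.Prime → ∀ P : Sylow p G, (P : Subgroup G) ≠ ⊤ → IsCyclic P) :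
    (∃ p : ℕ, p.Prime ∧ IsPGroup p G) ∨ IsZGroup G := by
  by_cases htop : ∃ p : ℕ, p.Prime ∧ ∃ P : Sylow p G, (P : Subgroup G) = ⊤
  · obtain ⟨p, hp, P, hP⟩ := htop
    exact Or.inl ⟨p, hp, isPGroup_of_sylow_eq_top hP⟩
  · exact Or.inr ⟨fun p hp P => hcyc p hp P fun hP => htop ⟨p, hp, P, hP⟩⟩

theorem isSolvable_of_proper_sylow_cyclic [Finite G]
    (hcyc : ∀ p : ℕ, p.Prime → ∀ P : Sylow p G, (P : Subgroup G) ≠ ⊤ → IsCyclic P) :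
    Group.IsSolvable G := by
  obtain ⟨p, hp, hpGroup⟩ | hZGroup := exists_isPGroup_or_isZGroup_of_proper_sylow_cyclic hcyc
  · have : Fact p.Prime := ⟨hp⟩
    have : Group.IsNilpotent G := hpGroup.isNilpotent
    infer_instance
  · infer_instance

end SylowCyclic

theorem finite_simple_group_of_proper_subgroups_cyclic_general {G : Type*} [Group G] [Finite G]
    [IsSimpleGroup G]
    (hcyc : ∀ p : ℕ, p.Prime → ∀ P : Sylow p G, (P : Subgroup G) ≠ ⊤ → IsCyclic P) :
    (∀ a b : G, a * b = b * a) ∧ ∃ p : ℕ, p.Prime ∧ Nat.card G = p := by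
  have hcomm : ∀ a b : G, a * b = b * a :=
    IsSimpleGroup.comm_iff_isSolvable.mpr (isSolvable_of_proper_sylow_cyclic hcyc)
  have : IsMulCommutative G := ⟨⟨hcomm⟩⟩
  exact ⟨hcomm, Nat.card G, Group.is_simple_iff_prime_card.mp inferInstance, rfl⟩

/-- A finite simple group all of whose proper subgroups are cyclic is commutative,
and hence cyclic of prime order. -/
theorem finite_simple_group_of_proper_subgroups_cyclic {G : Type*} [Group G] [Finite G]
    [IsSimpleGroup G] (hcyc : ∀ H : Subgroup G, H ≠ ⊤ → IsCyclic H) :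
    (∀ a b : G, a * b = b * a) ∧ ∃ p : ℕ, p.Prime ∧ Nat.card G = p :=
  finite_simple_group_of_proper_subgroups_cyclic_general fun _ _ P => hcyc P
end

section
/- Let G be a finite group and let H be a subgroup of G with H ≠ {1} and H ≠ G such that H ∩ x⁻¹Hx = {1} for every x ∈ G with x ∉ H (that is, G is a Frobenius group with Frobenius complement H). Then G is not a simple group. (Fact invoked in the proof of Theorem 5.11: Frobenius groups are never simple, because of the existence of the Frobenius kernel.) -/
/-!
A class function `χ` on a malnormal subgroup `H` extends to the class function
`Ind (χ - χ(1)) + χ(1)` on `G`, which takes the value `χ(1)` at all elements having no conjugate in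
`H`. By Frobenius reciprocity this extension is an isometry. If `χ` is an irreducible character, its
extension is therefore a difference of two characters, of norm one and of positive degree, hence a
character; by additivity the same holds for every character `χ` of `H`. The kernel of a
representation of `G` which affords the extension of the regular character of `H` consists of the
identity and the elements having no conjugate in `H`.
-/

open Module Representation

universe u

section FiniteOrder

theorem eq_one_of_norm_le_one_of_sum_eq_card {s : Multiset ℂ} (hs : ∀ z ∈ s, ‖z‖ ≤ 1)
    (hsum : s.sum = s.card) : ∀ z ∈ s, z = 1 := by
  have hre : ∀ z ∈ s, z.re ≤ 1 := fun z hz ↦ (Complex.re_le_norm z).trans (hs z hz)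
  have hzero : (s.map fun z ↦ 1 - z.re).sum = 0 := by
    have h : (s.map Complex.re).sum = s.card := by
      simpa only [hsum, Complex.coe_reAddGroupHom, Complex.natCast_re] using
        (map_multiset_sum Complex.reAddGroupHom s).symm
    simp [h]
  intro z hz
  have hz_re : 1 - z.re = 0 :=
    Multiset.all_zero_of_le_zero_le_of_sum_eq_zero
      (by simpa only [Multiset.mem_map, forall_exists_index, and_imp, forall_apply_eq_imp_iff₂,
        sub_nonneg] using hre) hzero _ (Multiset.mem_map_of_mem _ hz)
  have hz_norm : z.re ^ 2 + z.im ^ 2 ≤ 1 := by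
    simpa only [Complex.sq_norm, Complex.normSq_apply, ← sq] using
      pow_le_one₀ (n := 2) (norm_nonneg z) (hs z hz)
  have hz_one : z.re = 1 := by linarith
  refine Complex.ext hz_one (pow_eq_zero_iff two_ne_zero |>.1 (le_antisymm ?_ (sq_nonneg _)))
  rw [hz_one] at hz_norm
  linarith

theorem isSemisimple_of_pow_eq_one {k V : Type*} [Field k] [AddCommGroup V] [Module k V]
    {f : End k V} {n : ℕ} [NeZero (n : k)] (hf : f ^ n = 1) : f.IsSemisimple :=
  End.isSemisimple_of_squarefree_aeval_eq_zero (p := Polynomial.X ^ n - 1)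
    (Polynomial.X_pow_sub_one_separable_iff.2 (NeZero.ne _)).squarefree (by simp [hf])

theorem pow_eq_one_of_hasEigenvalue {k V : Type*} [Field k] [AddCommGroup V] [Module k V]
    {f : End k V} {n : ℕ} (hf : f ^ n = 1) {μ : k} (hμ : f.HasEigenvalue μ) : μ ^ n = 1 := by
  obtain ⟨v, hv⟩ := hμ.exists_hasEigenvector
  have hv' : v = μ ^ n • v := by simpa only [hf, End.one_apply] using hv.pow_apply n
  exact smul_left_injective k hv.2 (by simpa only [one_smul] using hv'.symm)

theorem eq_one_of_isSemisimple_of_forall_hasEigenvalue {k V : Type*} [Field k] [IsAlgClosed k]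
    [AddCommGroup V] [Module k V] [FiniteDimensional k V] {f : End k V} (hf : f.IsSemisimple)
    (h : ∀ μ, f.HasEigenvalue μ → μ = 1) : f = 1 := by
  rw [← End.isSemisimple_sub_algebraMap_iff (μ := (1 : k)), map_one] at hf
  refine sub_eq_zero.1 (hf.eq_zero_iff_forall_eigenvalue.2 fun μ hμ ↦ ?_)
  obtain ⟨v, hv⟩ := hμ.exists_hasEigenvector
  have hfv : f v = (μ + 1) • v := by
    rw [add_smul, one_smul, ← sub_eq_iff_eq_add]
    exact hv.apply_eq_smul
  have hμ_add_one : f.HasEigenvalue (μ + 1) :=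
    End.hasEigenvalue_of_hasEigenvector ⟨End.mem_eigenspace_iff.2 hfv, hv.2⟩
  exact add_eq_right.1 (h _ hμ_add_one)

theorem eq_one_of_pow_eq_one_of_trace_eq_finrank {V : Type*} [AddCommGroup V] [Module ℂ V]
    [FiniteDimensional ℂ V] {f : End ℂ V} {n : ℕ} (hn : n ≠ 0) (hf : f ^ n = 1)
    (htrace : LinearMap.trace ℂ V f = finrank ℂ V) : f = 1 := by
  have : NeZero (n : ℂ) := ⟨Nat.cast_ne_zero.2 hn⟩
  have hsplits : f.charpoly.Splits := IsAlgClosed.splits _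
  have hnorm : ∀ μ ∈ f.charpoly.roots, ‖μ‖ ≤ 1 := fun μ hμ ↦
    (Complex.norm_eq_one_of_pow_eq_one (pow_eq_one_of_hasEigenvalue hf <|
      (End.hasEigenvalue_iff_isRoot_charpoly _ _).2 (Polynomial.isRoot_of_mem_roots hμ)) hn).le
  have hsum : f.charpoly.roots.sum = f.charpoly.roots.card := by
    rw [← End.trace_eq_sum_roots_charpoly_of_splits hsplits, htrace,
      ← hsplits.natDegree_eq_card_roots, LinearMap.charpoly_natDegree]
  refine eq_one_of_isSemisimple_of_forall_hasEigenvalue (isSemisimple_of_pow_eq_one hf)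
    fun μ hμ ↦ eq_one_of_norm_le_one_of_sum_eq_card hnorm hsum μ ?_
  exact (Polynomial.mem_roots f.charpoly_monic.ne_zero).2
    ((End.hasEigenvalue_iff_isRoot_charpoly _ _).1 hμ)

theorem apply_eq_one_iff_character_eq {G V : Type*} [Group G] [Finite G] [AddCommGroup V]
    [Module ℂ V] [FiniteDimensional ℂ V] {ρ : Representation ℂ G V} {g : G} :
    ρ g = 1 ↔ ρ.character g = ρ.character 1 where
  mp h := by rw [character, character, h, map_one ρ]
  mpr h := eq_one_of_pow_eq_one_of_trace_eq_finrank (orderOf_pos g).ne'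
    (by rw [← map_pow, pow_orderOf_eq_one, map_one]) (by rw [← char_one ρ, ← h, character])

end FiniteOrder

section ClassFunctions

/-- A class function on a group is a function which is constant on conjugacy classes. -/
def IsClassFunction {G α : Type*} [Group G] (φ : G → α) : Prop :=
  ∀ g x, φ (x * g * x⁻¹) = φ g

variable {k G : Type*} [Field k] [Group G]

theorem isClassFunction_character {V : Type*} [AddCommGroup V] [Module k V]
    (ρ : Representation k G V) : IsClassFunction ρ.character :=
  ρ.char_conj

variable [Fintype G]

/-- The bilinear form `⟨φ, ψ⟩ = |G|⁻¹ ∑ φ(g) ψ(g⁻¹)` on the functions on a finite group `G`.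
Evaluating `ψ` at `g⁻¹` replaces the complex conjugation of the Hermitian inner product, with which
it agrees on characters over `ℂ`. -/
noncomputable def classPairing : LinearMap.BilinForm k (G → k) :=
  LinearMap.mk₂ k (fun φ ψ ↦ (Nat.card G : k)⁻¹ * ∑ g, φ g * ψ g⁻¹)
    (by simp [add_mul, mul_add, Finset.sum_add_distrib])
    (by simp [Finset.mul_sum, mul_assoc, mul_left_comm])
    (by simp [mul_add, Finset.sum_add_distrib])
    (by simp [Finset.mul_sum, mul_left_comm])

theorem classPairing_apply (φ ψ : G → k) :
    classPairing φ ψ = (Nat.card G : k)⁻¹ * ∑ g, φ g * ψ g⁻¹ :=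
  rfl

theorem classPairing_comm (φ ψ : G → k) : classPairing φ ψ = classPairing ψ φ := by
  rw [classPairing_apply, classPairing_apply, ← Equiv.sum_comp (Equiv.inv G)]
  simp only [Equiv.inv_apply, inv_inv, mul_comm]

theorem classPairing_character [NeZero (Nat.card G : k)] {V W : Type*} [AddCommGroup V]
    [Module k V] [FiniteDimensional k V] [AddCommGroup W] [Module k W] [FiniteDimensional k W]
    (ρ : Representation k G V) (σ : Representation k G W) :
    classPairing σ.character ρ.character = finrank k (IntertwiningMap ρ σ) :=
  let := invertibleOfNonzero (NeZero.ne (Nat.card G : k))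
  card_inv_mul_sum_char_mul_char_eq_finrank ρ σ

theorem classPairing_one_one [NeZero (Nat.card G : k)] : classPairing (1 : G → k) 1 = 1 := by
  simp only [classPairing_apply, Pi.one_apply, mul_one, Finset.sum_const, Finset.card_univ,
    nsmul_one, ← Nat.card_eq_fintype_card]
  exact inv_mul_cancel₀ (NeZero.ne _)

end ClassFunctions

section Characters

variable {k G V W : Type*} [Field k] [Group G]

/-- A function on `G` is a character over `k` if it is the character of a finite-dimensional
representation of `G` over `k`. The space is taken to be `kⁿ`, which is no restriction, so that no
choice of universe is needed. -/
def IsCharacter (χ : G → k) : Prop :=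
  ∃ (n : ℕ) (ρ : Representation k G (Fin n → k)), ρ.character = χ

variable [AddCommGroup V] [Module k V] [AddCommGroup W] [Module k W]

theorem character_eq_zero_of_subsingleton [Subsingleton V] (ρ : Representation k G V) :
    ρ.character = 0 :=
  funext fun g ↦ by rw [character, Subsingleton.elim (ρ g) 0, map_zero, Pi.zero_apply]

theorem isCompl_toSubmodule {ρ : Representation k G V} {S T : Subrepresentation ρ}
    (h : IsCompl S T) : IsCompl S.toSubmodule T.toSubmodule :=
  IsCompl.of_eq (congrArg Subrepresentation.toSubmodule h.inf_eq_bot)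
    (congrArg Subrepresentation.toSubmodule h.sup_eq_top)

variable [FiniteDimensional k V] [FiniteDimensional k W]

theorem isCharacter_character (ρ : Representation k G V) : IsCharacter ρ.character := by
  let e : V ≃ₗ[k] (Fin (finrank k V) → k) := (finBasis k V).equivFun
  let τ : Representation k G (Fin (finrank k V) → k) :=
    (e.conjAlgEquiv k : End k V →* _).comp ρ
  let f : Representation.Equiv ρ τ :=
    .mk e fun g ↦ LinearMap.ext fun v ↦ by simp [τ, LinearEquiv.conjAlgEquiv]
  exact ⟨finrank k V, τ, (char_iso f).symm⟩

theorem character_prod (ρ : Representation k G V) (σ : Representation k G W) :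
    (ρ.prod σ).character = ρ.character + σ.character :=
  funext fun g ↦ LinearMap.trace_prodMap' (ρ g) (σ g)

theorem character_trivial : (trivial k G V).character = (finrank k V : k) • 1 :=
  funext fun g ↦ by simp [character]

theorem IsCharacter.zero : IsCharacter (0 : G → k) :=
  ⟨0, 1, funext fun _ ↦ by simp [character]⟩

theorem IsCharacter.add {χ ψ : G → k} (hχ : IsCharacter χ) (hψ : IsCharacter ψ) :
    IsCharacter (χ + ψ) := by
  obtain ⟨m, ρ, rfl⟩ := hχ
  obtain ⟨n, σ, rfl⟩ := hψ
  exact character_prod ρ σ ▸ isCharacter_character (ρ.prod σ)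

theorem character_eq_add_of_isCompl {ρ : Representation k G V} {S T : Subrepresentation ρ}
    (h : IsCompl S T) :
    ρ.character = S.toRepresentation.character + T.toRepresentation.character := by
  rw [← character_prod]
  let e : (S.toSubmodule × T.toSubmodule) ≃ₗ[k] V :=
    Submodule.prodEquivOfIsCompl _ _ (isCompl_toSubmodule h)
  exact (char_iso <| Representation.Equiv.mk e fun g ↦
    LinearMap.ext fun x ↦ (map_add (ρ g) (x.1 : V) (x.2 : V)).symm).symm

theorem finrank_toSubmodule_lt {ρ : Representation k G V} {S : Subrepresentation ρ}
    (hS : S ≠ ⊤) : finrank k S.toSubmodule < finrank k V :=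
  Submodule.finrank_lt fun h ↦ hS (Subrepresentation.toSubmodule_injective h)

end Characters

section Maschke

variable {k : Type u} {G V W : Type*} [Field k] [Group G] [Finite G] [NeZero (Nat.card G : k)]

theorem character_induction {P : (G → k) → Prop} (zero : P 0)
    (add : ∀ χ ψ, P χ → P ψ → P (χ + ψ))
    (irreducible : ∀ {V : Type u} [AddCommGroup V] [Module k V] [FiniteDimensional k V]
      (ρ : Representation k G V) [IsIrreducible ρ], P ρ.character)
    {V : Type u} [AddCommGroup V] [Module k V] [FiniteDimensional k V]
    (ρ : Representation k G V) : P ρ.character := by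
  induction hn : finrank k V using Nat.strong_induction_on generalizing V with
  | _ n ih =>
  subst hn
  rcases subsingleton_or_nontrivial (Subrepresentation ρ) with hsub | _
  · have : Subsingleton V := (Submodule.subsingleton_iff k).1 <|
      subsingleton_of_bot_eq_top <| congrArg Subrepresentation.toSubmodule
        (Subsingleton.elim (⊥ : Subrepresentation ρ) ⊤)
    exact character_eq_zero_of_subsingleton ρ ▸ zero
  by_cases hρ : ∀ S : Subrepresentation ρ, S = ⊥ ∨ S = ⊤
  · have : IsIrreducible ρ := ⟨hρ⟩
    exact irreducible ρ
  push Not at hρ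
  obtain ⟨S, hS_bot, hS_top⟩ := hρ
  obtain ⟨T, hST⟩ := exists_isCompl S
  have hT_top : T ≠ ⊤ := fun hT ↦ hS_bot (by simpa only [hT, inf_top_eq] using hST.inf_eq_bot)
  rw [character_eq_add_of_isCompl hST]
  exact add _ _ (ih _ (finrank_toSubmodule_lt hS_top) S.toRepresentation rfl)
    (ih _ (finrank_toSubmodule_lt hT_top) T.toRepresentation rfl)

theorem exists_character_sub_eq_of_ne_zero [AddCommGroup V] [Module k V] [FiniteDimensional k V]
    [AddCommGroup W] [Module k W] [FiniteDimensional k W] {ρ : Representation k G V}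
    {σ : Representation k G W} {f : IntertwiningMap ρ σ} (hf : f ≠ 0) :
    ∃ (S : Subrepresentation ρ) (T : Subrepresentation σ), S ≠ ⊤ ∧
      S.toRepresentation.character - T.toRepresentation.character =
        ρ.character - σ.character := by
  obtain ⟨C, hC⟩ := exists_isCompl f.ker
  obtain ⟨T, hT⟩ := exists_isCompl f.range
  refine ⟨f.ker, T, fun hker ↦ hf ?_, ?_⟩
  · refine IntertwiningMap.ext (LinearMap.ker_eq_top.1 ?_)
    exact congrArg Subrepresentation.toSubmodule hker
  · let e : C.toSubmodule ≃ₗ[k] f.range.toSubmodule :=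
      f.toLinearMap.kerComplementEquivRange (isCompl_toSubmodule hC).symm
    have he : C.toRepresentation.character = f.range.toRepresentation.character :=
      char_iso (Representation.Equiv.mk e fun g ↦ LinearMap.ext fun v ↦
        Subtype.ext (f.isIntertwining ρ σ g v))
    rw [character_eq_add_of_isCompl hC, character_eq_add_of_isCompl hT, he]
    abel

end Maschke

section NormOne

variable {k G V W : Type*} [Field k] [Group G] [AddCommGroup V] [Module k V]
  [FiniteDimensional k V] [AddCommGroup W] [Module k W] [FiniteDimensional k W]

theorem finrank_intertwiningMap_self_eq_zero_iff (ρ : Representation k G V) :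
    finrank k (IntertwiningMap ρ ρ) = 0 ↔ finrank k V = 0 := by
  have : Module.Finite k (IntertwiningMap ρ ρ) :=
    Module.Finite.equiv (invariantsEquivIntertwiningMap ρ ρ)
  rw [finrank_zero_iff, finrank_zero_iff]
  refine ⟨fun _ ↦ subsingleton_of_forall_eq 0 fun v ↦ ?_, fun _ ↦ ⟨fun f g ↦ ?_⟩⟩
  · exact DFunLike.congr_fun (Subsingleton.elim (IntertwiningMap.id ρ) 0) v
  · exact IntertwiningMap.ext (Subsingleton.elim _ _)

variable [CharZero k] [Fintype G]

theorem subsingleton_of_classPairing_self_eq_one (ρ : Representation k G V)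
    (σ : Representation k G W) (hρσ : Subsingleton (IntertwiningMap ρ σ))
    (hdim : finrank k W ≤ finrank k V)
    (hnorm : classPairing (ρ.character - σ.character) (ρ.character - σ.character) = 1) :
    Subsingleton W := by
  have hend : finrank k (IntertwiningMap ρ ρ) + finrank k (IntertwiningMap σ σ) = 1 := by
    have horth : classPairing σ.character ρ.character = 0 := by
      rw [classPairing_character, finrank_zero_of_subsingleton, Nat.cast_zero]
    rw [map_sub, map_sub, LinearMap.sub_apply, LinearMap.sub_apply,
      classPairing_comm ρ.character σ.character, horth,
      classPairing_character, classPairing_character, sub_zero, zero_sub, sub_neg_eq_add] at hnorm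
    exact_mod_cast hnorm
  have hV := finrank_intertwiningMap_self_eq_zero_iff ρ
  have hW := finrank_intertwiningMap_self_eq_zero_iff σ
  exact (finrank_zero_iff (R := k)).1 (by omega)

theorem isCharacter_sub_of_classPairing_self_eq_one (ρ : Representation k G V)
    (σ : Representation k G W) (hdim : finrank k W ≤ finrank k V)
    (hnorm : classPairing (ρ.character - σ.character) (ρ.character - σ.character) = 1) :
    IsCharacter (ρ.character - σ.character) := by
  induction hn : finrank k V using Nat.strong_induction_on generalizing V W with
  | _ n ih =>
  subst hn
  rcases subsingleton_or_nontrivial (IntertwiningMap ρ σ) with hρσ | _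
  · have := subsingleton_of_classPairing_self_eq_one ρ σ hρσ hdim hnorm
    rw [character_eq_zero_of_subsingleton σ, sub_zero]
    exact isCharacter_character ρ
  -- A nonzero `ρ → σ` exhibits isomorphic summands of `ρ` and `σ`, which cancel in the difference.
  obtain ⟨f, hf⟩ := exists_ne (0 : IntertwiningMap ρ σ)
  obtain ⟨S, T, hS, hsub⟩ := exists_character_sub_eq_of_ne_zero hf
  have hdim' : finrank k T.toSubmodule ≤ finrank k S.toSubmodule := by
    have hone := congrFun hsub 1
    simp only [Pi.sub_apply, char_one, sub_eq_sub_iff_add_eq_add] at hone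
    norm_cast at hone
    omega
  rw [← hsub] at hnorm ⊢
  exact ih _ (finrank_toSubmodule_lt hS) S.toRepresentation T.toRepresentation hdim' hnorm rfl

end NormOne

section Traces

theorem trace_compLeft_comp_funLeft {R ι M : Type*} [CommRing R] [Fintype ι] [DecidableEq ι]
    [AddCommGroup M] [Module R M] [Module.Free R M] [Module.Finite R M] (A : End R M)
    (φ : ι → ι) :
    LinearMap.trace R (ι → M) (A.compLeft ι ∘ₗ LinearMap.funLeft R M φ) =
      ∑ i, if φ i = i then LinearMap.trace R M A else 0 := by
  have hsum : A.compLeft ι ∘ₗ LinearMap.funLeft R M φ =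
      ∑ i, LinearMap.single R (fun _ ↦ M) i ∘ₗ A ∘ₗ LinearMap.proj (φ i) := by
    ext i v j
    simp [Pi.single_apply]
  rw [hsum, map_sum]
  refine Finset.sum_congr rfl fun i _ ↦ ?_
  rw [LinearMap.trace_comp_comm', LinearMap.comp_assoc]
  split_ifs with hi
  · rw [hi, LinearMap.proj_comp_single_same, LinearMap.comp_id]
  · rw [LinearMap.proj_comp_single_ne _ _ _ _ hi, LinearMap.comp_zero, map_zero]

theorem trace_restrict_eq_average {k G V : Type*} [Field k] [Group G] [Fintype G]
    [NeZero (Nat.card G : k)] [AddCommGroup V] [Module k V] [FiniteDimensional k V]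
    {ρ : Representation k G V} {p : Submodule k V} (hp : p = ρ.invariants) {f : End k V}
    (hf : ∀ v ∈ p, f v ∈ p) :
    LinearMap.trace k p (f.restrict hf) =
      (Nat.card G : k)⁻¹ * ∑ g, LinearMap.trace k V (ρ g ∘ₗ f) := by
  subst hp
  have : Invertible (Fintype.card G : k) :=
    invertibleOfNonzero (Fintype.card_eq_nat_card (α := G) ▸ NeZero.ne (Nat.card G : k))
  have hmem : ∀ v, (averageMap ρ ∘ₗ f) v ∈ ρ.invariants := fun v ↦ averageMap_invariant ρ (f v)
  have hrestrict : f.restrict hf = (averageMap ρ ∘ₗ f).restrict fun v _ ↦ hmem v :=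
    LinearMap.ext fun v ↦ Subtype.ext (averageMap_id ρ (f v) (hf v v.2)).symm
  rw [hrestrict, LinearMap.trace_restrict_eq_of_forall_mem _ _ hmem]
  have hcomp : averageMap ρ ∘ₗ f = (Nat.card G : k)⁻¹ • ∑ g, ρ g ∘ₗ f := by
    ext v
    simp [GroupAlgebra.average]
  rw [hcomp, map_smul, map_sum, smul_eq_mul]

end Traces

section Induction

variable {k G : Type*} [Field k] [Group G] {H : Subgroup G}

theorem extend_coe_of_notMem (α : H → k) {g : G} (hg : g ∉ H) :
    Function.extend ((↑) : H → G) α 0 g = 0 :=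
  Function.extend_apply' _ _ _ fun ⟨h, hh⟩ ↦ hg (hh ▸ h.2)

theorem extend_coe_eq_sum_ite [Fintype H] [DecidableEq G] (α : H → k) (g : G) :
    Function.extend ((↑) : H → G) α 0 g = ∑ h : H, if h = g then α h else 0 := by
  by_cases hg : g ∈ H
  · lift g to H using hg
    simp only [Subtype.val_injective.extend_apply, SetLike.coe_eq_coe, Finset.sum_ite_eq',
      Finset.mem_univ, if_true]
  · rw [extend_coe_of_notMem α hg]
    refine (Finset.sum_eq_zero fun (h : H) _ ↦ if_neg fun hhg ↦ hg ?_).symm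
    exact hhg ▸ h.2

variable {V : Type*} [AddCommGroup V] [Module k V]

/-- The representation `(h • f) x = ρ h (f (h⁻¹ x))` of a subgroup `H` on the functions `G → V`.
Its invariants are the space of the representation induced from `ρ`. -/
def translationRep (ρ : Representation k H V) : Representation k H (G → V) where
  toFun h := (ρ h).compLeft G ∘ₗ LinearMap.funLeft k V (fun x ↦ (h : G)⁻¹ * x)
  map_one' := by ext; simp
  map_mul' a b := by ext; simp [mul_assoc]

theorem coindV_eq_invariants (ρ : Representation k H V) :
    coindV H.subtype ρ = (translationRep ρ).invariants := by
  ext f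
  refine ⟨fun hf h ↦ funext fun x ↦ ?_, fun hf h x ↦ ?_⟩
  · exact (hf h ((h : G)⁻¹ * x)).symm.trans (congrArg f (mul_inv_cancel_left _ x))
  · exact (congrFun (hf h) (h * x)).symm.trans (congrArg (ρ h ∘ f) (inv_mul_cancel_left _ x))

variable [Fintype G]

variable (H) in
/-- Induction of functions from a subgroup `H` to `G`, sending `α` to
`g ↦ |H|⁻¹ ∑ α°(x g x⁻¹)`, where `x` runs over `G` and `α°` is the extension of `α` by zero. -/
noncomputable def inducedFun : (H → k) →ₗ[k] (G → k) :=
  (Nat.card H : k)⁻¹ • ∑ x : G, LinearMap.funLeft k k (fun g ↦ x * g * x⁻¹) ∘ₗ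
    Function.ExtendByZero.linearMap k ((↑) : H → G)

theorem inducedFun_apply (α : H → k) (g : G) :
    inducedFun H α g =
      (Nat.card H : k)⁻¹ * ∑ x : G, Function.extend ((↑) : H → G) α 0 (x * g * x⁻¹) := by
  simp [inducedFun, LinearMap.sum_apply, LinearMap.funLeft_apply]

theorem isClassFunction_inducedFun (α : H → k) : IsClassFunction (inducedFun H α) := by
  intro g y
  rw [inducedFun_apply, inducedFun_apply, ← Equiv.sum_comp (Equiv.mulRight y)
    fun x ↦ Function.extend ((↑) : H → G) α 0 (x * g * x⁻¹)]
  simp only [Equiv.coe_mulRight, mul_inv_rev, mul_assoc]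

theorem inducedFun_eq_zero (α : H → k) {g : G} (hg : ∀ x, x * g * x⁻¹ ∉ H) :
    inducedFun H α g = 0 := by
  rw [inducedFun_apply, Finset.sum_eq_zero fun x _ ↦ extend_coe_of_notMem α (hg x), mul_zero]

theorem classPairing_inducedFun [NeZero (Nat.card G : k)] [Fintype H] (α : H → k) {φ : G → k}
    (hφ : IsClassFunction φ) :
    classPairing (inducedFun H α) φ = classPairing α (φ ∘ (↑)) := by
  have hconj : ∀ x : G, ∑ g, Function.extend ((↑) : H → G) α 0 (x * g * x⁻¹) * φ g⁻¹ =
      ∑ h : H, α h * φ (h : G)⁻¹ := by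
    intro x
    calc ∑ g, Function.extend ((↑) : H → G) α 0 (x * g * x⁻¹) * φ g⁻¹
        = ∑ g, Function.extend ((↑) : H → G) α 0 g * φ g⁻¹ :=
          Fintype.sum_equiv (MulAut.conj x).toEquiv _ _ fun g ↦ by
            simp [← hφ g⁻¹ x, mul_assoc]
      _ = ∑ h : H, α h * φ (h : G)⁻¹ :=
          (Fintype.sum_of_injective ((↑) : H → G) Subtype.val_injective _ _
            (fun g hg ↦ by rw [extend_coe_of_notMem α (by simpa using hg), zero_mul])
            fun h ↦ by rw [Subtype.val_injective.extend_apply]).symm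
  calc classPairing (inducedFun H α) φ
      = (Nat.card G : k)⁻¹ * ((Nat.card H : k)⁻¹ *
          ∑ x : G, ∑ g, Function.extend ((↑) : H → G) α 0 (x * g * x⁻¹) * φ g⁻¹) := by
        rw [classPairing_apply, Finset.sum_comm, Finset.mul_sum _ _ (Nat.card H : k)⁻¹]
        simp only [inducedFun_apply, mul_assoc, Finset.sum_mul]
    _ = classPairing α (φ ∘ (↑)) := by
        simp only [hconj, Finset.sum_const, Finset.card_univ, ← Nat.card_eq_fintype_card,
          nsmul_eq_mul]
        rw [mul_left_comm _ (Nat.card G : k), inv_mul_cancel_left₀ (NeZero.ne _)]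
        rfl

theorem character_coind [NeZero (Nat.card H : k)] [FiniteDimensional k V]
    (ρ : Representation k H V) :
    (coind H.subtype ρ).character = inducedFun H ρ.character := by
  classical
  ext g
  have hfix : ∀ (h : H) (x : G), (h : G)⁻¹ * x * g = x ↔ (h : G) = x * g * x⁻¹ := fun h x ↦ by
    rw [mul_assoc, inv_mul_eq_iff_eq_mul, eq_mul_inv_iff_mul_eq, eq_comm]
  calc (coind H.subtype ρ).character g
      = (Nat.card H : k)⁻¹ * ∑ h : H, LinearMap.trace k (G → V)
          (translationRep ρ h ∘ₗ LinearMap.funLeft k V (· * g)) :=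
        trace_restrict_eq_average (coindV_eq_invariants ρ)
          fun f hf ↦ (coind H.subtype ρ g ⟨f, hf⟩).2
    _ = (Nat.card H : k)⁻¹ * ∑ h : H, ∑ x : G,
          if (h : G)⁻¹ * x * g = x then ρ.character h else 0 := by
        congr! with h
        exact trace_compLeft_comp_funLeft (ρ h) fun x ↦ (h : G)⁻¹ * x * g
    _ = inducedFun H ρ.character g := by
        rw [Finset.sum_comm, inducedFun_apply]
        simp only [extend_coe_eq_sum_ite, hfix]

end Induction

section Malnormal

variable {G : Type*} [Group G] {H : Subgroup G}

/-- A subgroup `H` is malnormal if it meets each of its conjugates by an element outside `H`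
trivially. For `H` nontrivial and proper in a finite group `G`, this says that `G` is a Frobenius
group with complement `H`. -/
def IsMalnormal (H : Subgroup G) : Prop :=
  ∀ h ∈ H, h ≠ 1 → ∀ x, x * h * x⁻¹ ∈ H → x ∈ H

theorem isMalnormal_of_forall_inf_map_conj_eq_bot
    (h : ∀ x ∉ H, H ⊓ H.map (MulAut.conj x⁻¹).toMonoidHom = ⊥) : IsMalnormal H := by
  refine fun g hg hg_one x hx ↦ by_contra fun hxH ↦ hg_one ?_
  rw [← Subgroup.mem_bot, ← h x hxH]
  exact ⟨hg, x * g * x⁻¹, hx, by simp [mul_assoc]⟩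

variable {k : Type*} [Field k] [Fintype G]

theorem inducedFun_coe [NeZero (Nat.card H : k)] (hH : IsMalnormal H) {α : H → k}
    (hα : IsClassFunction α) (hone : α 1 = 0) (h : H) : inducedFun H α h = α h := by
  classical
  have hterm : ∀ x : G, Function.extend ((↑) : H → G) α 0 (x * h * x⁻¹) =
      if x ∈ H then α h else 0 := by
    intro x
    split_ifs with hx
    · rw [← hα h ⟨x, hx⟩]
      exact Subtype.val_injective.extend_apply α 0 (⟨x, hx⟩ * h * ⟨x, hx⟩⁻¹)
    · rcases eq_or_ne h 1 with rfl | hne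
      · rw [Subgroup.coe_one, mul_one, mul_inv_cancel, ← Subgroup.coe_one H,
          Subtype.val_injective.extend_apply, hone]
      · exact extend_coe_of_notMem α fun hxh ↦ hx (hH h h.2 (by simpa using hne) x hxh)
  rw [inducedFun_apply, Finset.sum_congr rfl fun x _ ↦ hterm x, ← Finset.sum_filter,
    Finset.sum_const, ← Fintype.card_subtype, nsmul_eq_mul, ← Nat.card_eq_fintype_card]
  exact inv_mul_cancel_left₀ (NeZero.ne _) _

variable (H) in
/-- Frobenius' extension of class functions from a malnormal subgroup `H` to `G`, sending `χ` to
the function induced from `χ - χ(1)`, plus the constant `χ(1)`. -/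
noncomputable def frobeniusExtension : (H → k) →ₗ[k] (G → k) :=
  inducedFun H ∘ₗ (LinearMap.id - (LinearMap.proj 1).smulRight 1) + (LinearMap.proj 1).smulRight 1

theorem frobeniusExtension_apply (χ : H → k) :
    frobeniusExtension H χ = inducedFun H (χ - χ 1 • 1) + χ 1 • 1 :=
  rfl

theorem frobeniusExtension_eq_apply_one (χ : H → k) {g : G} (hg : ∀ x, x * g * x⁻¹ ∉ H) :
    frobeniusExtension H χ g = χ 1 := by
  simp [frobeniusExtension_apply, inducedFun_eq_zero _ hg]

theorem isClassFunction_frobeniusExtension (χ : H → k) :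
    IsClassFunction (frobeniusExtension H χ) := fun g x ↦ by
  simp [frobeniusExtension_apply, isClassFunction_inducedFun _ g x]

theorem frobeniusExtension_coe [NeZero (Nat.card H : k)] (hH : IsMalnormal H) {χ : H → k}
    (hχ : IsClassFunction χ) (h : H) : frobeniusExtension H χ h = χ h := by
  have hsub : IsClassFunction (χ - χ 1 • 1) := fun g x ↦ by simp [hχ g x]
  rw [frobeniusExtension_apply, Pi.add_apply, inducedFun_coe hH hsub (by simp)]
  simp

theorem classPairing_one_frobeniusExtension [CharZero k] [Fintype H] (χ : H → k) :
    classPairing 1 (frobeniusExtension H χ) = classPairing 1 χ := by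
  have hone : IsClassFunction (1 : G → k) := fun _ _ ↦ rfl
  rw [frobeniusExtension_apply, map_add, map_smul, classPairing_comm,
    classPairing_inducedFun _ hone, classPairing_comm, Pi.one_comp, map_sub, map_smul,
    classPairing_one_one, classPairing_one_one, sub_add_cancel]

theorem classPairing_frobeniusExtension [CharZero k] [Fintype H] (hH : IsMalnormal H)
    (χ : H → k) {ψ : H → k} (hψ : IsClassFunction ψ) :
    classPairing (frobeniusExtension H χ) (frobeniusExtension H ψ) = classPairing χ ψ := by
  have hrestrict : frobeniusExtension H ψ ∘ (↑) = ψ := funext (frobeniusExtension_coe hH hψ)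
  rw [frobeniusExtension_apply χ, map_add, LinearMap.add_apply, map_smul, LinearMap.smul_apply,
    classPairing_one_frobeniusExtension,
    classPairing_inducedFun _ (isClassFunction_frobeniusExtension ψ), hrestrict,
    ← LinearMap.smul_apply, ← map_smul, ← LinearMap.add_apply, ← map_add, sub_add_cancel]

theorem frobeniusExtension_character [NeZero (Nat.card H : k)] {V : Type*} [AddCommGroup V]
    [Module k V] [FiniteDimensional k V] (σ : Representation k H V) :
    frobeniusExtension H σ.character = ((coind H.subtype σ).prod (trivial k G V)).character -
      (coind H.subtype (trivial k H V)).character := by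
  rw [frobeniusExtension_apply, map_sub, character_prod, character_coind, character_coind,
    character_trivial, character_trivial, char_one]
  abel

theorem isCharacter_frobeniusExtension_of_isIrreducible [CharZero k] [IsAlgClosed k]
    (hH : IsMalnormal H) {V : Type*} [AddCommGroup V] [Module k V] [FiniteDimensional k V]
    (σ : Representation k H V) [IsIrreducible σ] :
    IsCharacter (frobeniusExtension H σ.character) := by
  have := Fintype.ofFinite H
  have hσ := isClassFunction_character σ
  rw [frobeniusExtension_character]
  refine isCharacter_sub_of_classPairing_self_eq_one _ _ ?_ ?_
  · have hone : frobeniusExtension H σ.character (1 : G) = σ.character 1 :=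
      frobeniusExtension_coe hH hσ 1
    rw [frobeniusExtension_character, Pi.sub_apply, char_one, char_one, char_one,
      sub_eq_iff_eq_add] at hone
    norm_cast at hone
    omega
  · rw [← frobeniusExtension_character, classPairing_frobeniusExtension hH _ hσ,
      classPairing_character, IsIrreducible.finrank_intertwiningMap_self, Nat.cast_one]

theorem isCharacter_frobeniusExtension [CharZero k] [IsAlgClosed k] (hH : IsMalnormal H)
    {χ : H → k} (hχ : IsCharacter χ) : IsCharacter (frobeniusExtension H χ) := by
  obtain ⟨n, ρ, rfl⟩ := hχ
  refine character_induction (P := fun χ ↦ IsCharacter (frobeniusExtension H χ))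
    ?_ (fun χ ψ hχ hψ ↦ ?_) (fun σ ↦ ?_) ρ
  · rw [map_zero]
    exact .zero
  · rw [map_add]
    exact hχ.add hψ
  · exact isCharacter_frobeniusExtension_of_isIrreducible hH σ

end Malnormal

section FixedPoints

theorem exists_fixedBy_eq_empty {G α : Type*} [Group G] [Finite G] [MulAction G α]
    [MulAction.IsPretransitive G α] [Nontrivial α] :
    ∃ g : G, MulAction.fixedBy α g = ∅ := by
  classical
  have := Fintype.ofFinite G
  have : Finite α :=
    Finite.of_surjective _ (MulAction.surjective_smul G (Classical.arbitrary α))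
  have := Fintype.ofFinite α
  by_contra! hfix
  have hburnside := MulAction.sum_card_fixedBy_eq_card_orbits_mul_card_group G α
  have horbit : Fintype.card (MulAction.orbitRel.Quotient G α) = 1 :=
    Fintype.card_eq_one_iff_nonempty_unique.2 <|
      (MulAction.pretransitive_iff_unique_quotient_of_nonempty G α).1 inferInstance
  rw [horbit, one_mul, ← Finset.card_univ, Finset.card_eq_sum_ones] at hburnside
  refine hburnside.not_gt (Finset.sum_lt_sum (fun g _ ↦ ?_) ⟨1, Finset.mem_univ _, ?_⟩)
  · exact Fintype.card_pos_iff.2 (hfix g).to_subtype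
  · obtain ⟨a, b, hab⟩ := exists_pair_ne α
    exact Fintype.one_lt_card_iff.2 ⟨⟨a, one_smul G a⟩, ⟨b, one_smul G b⟩,
      fun h ↦ hab (congrArg Subtype.val h)⟩

variable {G : Type*} [Group G] {H : Subgroup G}

theorem exists_forall_conj_notMem [Finite G] (hH : H ≠ ⊤) : ∃ g : G, ∀ x, x * g * x⁻¹ ∉ H := by
  have : Nontrivial (G ⧸ H) := QuotientGroup.nontrivial_iff.2 hH
  obtain ⟨g, hg⟩ := exists_fixedBy_eq_empty (G := G) (α := G ⧸ H)
  refine ⟨g, fun x hx ↦ Set.eq_empty_iff_forall_notMem.1 hg ((x⁻¹ : G) : G ⧸ H) ?_⟩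
  rw [MulAction.mem_fixedBy, MulAction.Quotient.smul_coe, eq_comm, QuotientGroup.eq]
  simpa only [inv_inv, smul_eq_mul, mul_assoc] using hx

end FixedPoints

section FrobeniusKernel

theorem leftRegular_apply_ne_one {k G : Type*} [CommSemiring k] [Nontrivial k] [Monoid G] {g : G}
    (hg : g ≠ 1) : leftRegular k G g ≠ 1 := fun h ↦ hg <| by
  simpa [MonoidAlgebra.single_left_inj] using LinearMap.congr_fun h (MonoidAlgebra.single 1 1)

variable {G : Type*} [Group G] {H : Subgroup G}

/-- The Frobenius kernel of `G` with respect to a subgroup `H`: the identity and the elements which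
have no conjugate in `H`. -/
def frobeniusKernel (H : Subgroup G) : Set G :=
  {g | g = 1 ∨ ∀ x, x * g * x⁻¹ ∉ H}

theorem frobeniusKernel_ne_singleton_one [Finite G] (hH : H ≠ ⊤) : frobeniusKernel H ≠ {1} := by
  obtain ⟨g, hg⟩ := exists_forall_conj_notMem hH
  intro h
  obtain rfl : g = 1 := h.subset (.inr hg)
  exact hg 1 (by simpa only [mul_one, inv_one] using H.one_mem)

theorem frobeniusKernel_ne_univ (hH : H ≠ ⊥) : frobeniusKernel H ≠ Set.univ := by
  obtain ⟨⟨g, hg⟩, hg_one⟩ := H.ne_bot_iff_exists_ne_one.1 hH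
  intro h
  rcases h.symm.subset (Set.mem_univ g) with rfl | hconj
  · exact hg_one rfl
  · exact hconj 1 (by simpa only [one_mul, inv_one, mul_one] using hg)

theorem IsMalnormal.exists_normal_coe_eq_frobeniusKernel [Finite G] (hH : IsMalnormal H) :
    ∃ N : Subgroup G, N.Normal ∧ (N : Set G) = frobeniusKernel H := by
  have := Fintype.ofFinite G
  let χ : H → ℂ := (leftRegular ℂ H).character
  have hχ : IsClassFunction χ := isClassFunction_character _
  obtain ⟨n, τ, hτ⟩ := isCharacter_frobeniusExtension hH
    (isCharacter_character (leftRegular ℂ H))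
  have hτ_coe : ∀ h : H, τ.character h = χ h := hτ ▸ frobeniusExtension_coe hH hχ
  have hτ_one : τ.character 1 = χ 1 := hτ_coe 1
  have hmem : ∀ g, g ∈ τ.ker ↔ τ.character g = χ 1 := fun g ↦ by
    rw [MonoidHom.mem_ker, apply_eq_one_iff_character_eq, hτ_one]
  refine ⟨τ.ker, inferInstance, Set.ext fun g ↦ ⟨fun hg ↦ ?_, ?_⟩⟩
  · refine or_iff_not_imp_right.2 fun hconj ↦ ?_
    push Not at hconj
    obtain ⟨x, hx⟩ := hconj
    have hker : χ ⟨x * g * x⁻¹, hx⟩ = χ 1 := by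
      rw [← hτ_coe, ← hmem]
      exact τ.normal_ker.conj_mem g hg x
    have hone := not_imp_not.1 leftRegular_apply_ne_one (apply_eq_one_iff_character_eq.2 hker)
    exact conj_eq_one_iff.1 (congrArg Subtype.val hone)
  · rintro (rfl | hg)
    · exact one_mem _
    · rw [SetLike.mem_coe, hmem, hτ, frobeniusExtension_eq_apply_one _ hg]

end FrobeniusKernel

/-- A finite Frobenius group is not simple: if `H` is a nontrivial proper subgroup of a
finite group `G` such that `H ⊓ x⁻¹Hx = ⊥` for every `x ∉ H`, then `G` is not simple. -/
theorem frobenius_group_not_simple {G : Type*} [Group G] [Finite G] (H : Subgroup G)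
    (hbot : H ≠ ⊥) (htop : H ≠ ⊤)
    (hmal : ∀ x : G, x ∉ H → H ⊓ Subgroup.map ((MulAut.conj x⁻¹).toMonoidHom) H = ⊥) :
    ¬ IsSimpleGroup G := by
  intro hsimple
  have hH : IsMalnormal H := isMalnormal_of_forall_inf_map_conj_eq_bot hmal
  obtain ⟨N, hN, hker⟩ := hH.exists_normal_coe_eq_frobeniusKernel
  rcases hN.eq_bot_or_eq_top with rfl | rfl
  · exact frobeniusKernel_ne_singleton_one htop (hker.symm.trans Subgroup.coe_bot)
  · exact frobeniusKernel_ne_univ hbot (hker.symm.trans Subgroup.coe_top)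
end

section
/- Let G be a finitely generated free abelian group and let M be a finite abelian group equipped with an action of G by group automorphisms (a G-module whose underlying set is finite). Then for every n ≥ 0 the group cohomology H^n(G, M) is a finite group. (Finiteness hypothesis verified in Examples 5.4 and 5.6, needed to apply Lemma 5.5.) -/
/-!
Group cohomology is `Ext` over the group ring: `Hⁿ(G, M) = Extⁿ(k, M)`. If `k[G]` is Noetherian,
a finitely generated module `N` sits in `0 → N' → P → N → 0` with `P` finite free and `N'` again
finitely generated, and the connecting map `Extⁿ(N', M) → Extⁿ⁺¹(N, M)` is onto. So the finiteness
of `Extⁿ(N, M)` for finite `M` descends to that of `Hom(N, M)`, where it holds because a linear map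
is determined by its values on generators. Finally `ℤ[ℤᵈ]` is Noetherian by Hilbert's basis theorem.
-/

open CategoryTheory Abelian

universe w v u

section ModuleExt

variable {R : Type u} [Ring R]

theorem finite_linearMap_of_module_finite (M N : Type*) [AddCommGroup M] [Module R M]
    [AddCommGroup N] [Module R N] [Module.Finite R M] [Finite N] : Finite (M →ₗ[R] N) := by
  obtain ⟨S, hS⟩ := Module.Finite.fg_top (R := R) (M := M)
  exact .of_injective (fun (f : M →ₗ[R] N) (s : S) => f s) fun f g hfg =>
    LinearMap.ext_on hS fun s hs => congrFun hfg ⟨s, hs⟩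

theorem exists_free_finite_surjective [Small.{v} R] (M : Type v) [AddCommGroup M] [Module R M]
    [Module.Finite R M] :
    ∃ (P : ModuleCat.{v} R) (f : P →ₗ[R] M),
      Module.Free R P ∧ Module.Finite R P ∧ Function.Surjective f := by
  obtain ⟨m, f, hf⟩ := Module.Finite.exists_fin' R M
  let e := LinearEquiv.piCongrRight fun _ : Fin m => Shrink.linearEquiv.{v} R R
  exact ⟨.of R (Fin m → Shrink.{v} R), f ∘ₗ e.toLinearMap, .pi R _, .pi, hf.comp e.surjective⟩

theorem finite_ext_of_module_finite [Small.{v} R] [IsNoetherianRing R] (N M : ModuleCat.{v} R)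
    [Module.Finite R N] [Finite M] (n : ℕ) : Finite (Ext N M n) := by
  induction n generalizing N with
  | zero =>
    have : Finite (N →ₗ[R] M) := finite_linearMap_of_module_finite N M
    exact .of_equiv _ (Ext.homEquiv₀.trans ModuleCat.homEquiv).symm
  | succ n finite_ext =>
    obtain ⟨P, f, _, _, hf⟩ := exists_free_finite_surjective (R := R) N
    have hS : f.shortComplexKer.ShortExact := LinearMap.shortExact_shortComplexKer hf
    have : Finite (Ext f.shortComplexKer.X₁ M n) := finite_ext _
    exact .of_surjective _ (precomp_extClass_surjective_of_projective_X₂ M hS n)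

end ModuleExt

theorem moduleCat_homologyπ_eq_zero_iff {R : Type*} [Ring R] {ι : Type*} {c : ComplexShape ι}
    (K : HomologicalComplex (ModuleCat.{v} R) c) {i j : ι} (hij : c.prev j = i) (z : K.cycles j) :
    K.homologyπ j z = 0 ↔ ∃ x : K.X i, K.d i j x = K.iCycles j z := by
  have hexact : Function.Exact (K.toCycles i j) (K.homologyπ j) :=
    (ShortComplex.ShortExact.moduleCat_exact_iff_function_exact _).1 <|
      ShortComplex.exact_of_g_is_cokernel (.mk _ _ (K.toCycles_comp_homologyπ i j))
        (K.homologyIsCokernel i j hij)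
  have iCycles_injective : Function.Injective (K.iCycles j) :=
    (ModuleCat.mono_iff_injective _).1 inferInstance
  have iCycles_toCycles (x : K.X i) : K.iCycles j (K.toCycles i j x) = K.d i j x :=
    congr($(K.toCycles_i i j) x)
  simp only [hexact z, Set.mem_range, ← iCycles_toCycles, iCycles_injective.eq_iff]

section ProjectiveResolution

variable {C : Type u} [Category.{v} C] [Abelian C] {X : C} (P : ProjectiveResolution X)

section ExtMk

open CochainComplex.HomComplex

variable [HasExt.{w} C] {Y : C}

theorem extMk_zero_eq_zero_iff (f : P.complex.X 0 ⟶ Y) (hf : P.complex.d 1 0 ≫ f = 0) :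
    P.extMk f 1 rfl hf = 0 ↔ f = 0 := by
  refine ⟨fun h => ?_, by rintro rfl; exact P.extMk_zero 1 rfl⟩
  rw [← P.extEquivCohomologyClass.apply_eq_iff_eq, P.extEquivCohomologyClass_extMk,
    P.extEquivCohomologyClass_zero, CohomologyClass.mk_eq_zero_iff,
    Cocycle.toSingleMk_mem_coboundaries_iff _ _ _ _ _ 1 rfl] at h
  obtain ⟨g, hg⟩ := h
  have hX₁ : Limits.IsZero (P.cochainComplex.X 1) :=
    P.cochainComplex.isZero_of_isStrictlyLE 0 1 (by simp)
  simpa [hX₁.eq_of_src g 0] using hg.symm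

-- In degree `0` the predecessor `prev 0` is `0` itself and `P.complex.d 0 0 = 0`.
theorem extMk_eq_zero_iff_exists_prev {n : ℕ} (f : P.complex.X n ⟶ Y)
    (hf : P.complex.d (n + 1) n ≫ f = 0) :
    P.extMk f (n + 1) rfl hf = 0 ↔
      ∃ g : P.complex.X ((ComplexShape.up ℕ).prev n) ⟶ Y, P.complex.d n _ ≫ g = f := by
  cases n with
  | zero => simp [extMk_zero_eq_zero_iff, eq_comm (a := (0 : P.complex.X 0 ⟶ Y))]
  | succ n => exact P.extMk_eq_zero_iff f _ rfl hf _ (by simp)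

end ExtMk

variable (Y : C) (A : Type*) [Ring A] [Linear A C] (n : ℕ)

/-- The inclusion of the `n`-cocycles of `Hom(P, Y)` into its `n`-cochains, with values in the
morphisms `P.complex.X n ⟶ Y` rather than in the underlying `A`-module, so that they can be
composed and fed to `ProjectiveResolution.extMk`. -/
noncomputable def cyclesToHom :
    (P.complex.linearYonedaObj A Y).cycles n →+ (P.complex.X n ⟶ Y) :=
  ((P.complex.linearYonedaObj A Y).iCycles n).hom.toAddMonoidHom

theorem d_comp_cyclesToHom (z : (P.complex.linearYonedaObj A Y).cycles n) :
    P.complex.d (n + 1) n ≫ cyclesToHom P Y A n z = 0 :=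
  congr($((P.complex.linearYonedaObj A Y).iCycles_d n (n + 1)) z)

variable [HasExt.{w} C]

/-- The class in `Extⁿ(X, Y)` of an `n`-cocycle of `Hom(P, Y)`, for `P` a projective resolution
of `X`. -/
noncomputable def cyclesToExt : (P.complex.linearYonedaObj A Y).cycles n →+ Ext X Y n where
  toFun z := P.extMk (cyclesToHom P Y A n z) (n + 1) rfl (d_comp_cyclesToHom P Y A n z)
  map_zero' := by simp
  map_add' z z' := by simp [P.add_extMk]

theorem cyclesToExt_surjective : Function.Surjective (cyclesToExt P Y A n) := by
  intro e
  obtain ⟨f, hf, rfl⟩ := P.extMk_surjective e (n + 1) rfl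
  let K := P.complex.linearYonedaObj A Y
  let z : K.cycles n := K.cyclesMk f (n + 1) (by simp) hf
  have hz : cyclesToHom P Y A n z = f := K.i_cyclesMk (i := n) f (n + 1) (by simp) hf
  exact ⟨z, by simp [cyclesToExt, hz]⟩

theorem ker_cyclesToExt :
    (cyclesToExt P Y A n).ker =
      ((P.complex.linearYonedaObj A Y).homologyπ n).hom.toAddMonoidHom.ker := by
  ext z
  exact (extMk_eq_zero_iff_exists_prev P _ (d_comp_cyclesToHom P Y A n z)).trans
    (moduleCat_homologyπ_eq_zero_iff _ rfl z).symm

/-- `Extⁿ(X, Y)`, as defined through the derived category, is the `n`-th cohomology of `Hom(P, Y)`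
for any projective resolution `P` of `X`: both are the quotient of the cocycles by the
coboundaries. -/
noncomputable def homologyLinearYonedaObjAddEquivExt :
    (P.complex.linearYonedaObj A Y).homology n ≃+ Ext X Y n :=
  let π := (P.complex.linearYonedaObj A Y).homologyπ n
  have hπ : Function.Surjective π := (ModuleCat.epi_iff_surjective π).1 inferInstance
  (QuotientAddGroup.quotientKerEquivOfSurjective π.hom.toAddMonoidHom hπ).symm.trans <|
    (QuotientAddGroup.quotientAddEquivOfEq (ker_cyclesToExt P Y A n).symm).trans <|
      QuotientAddGroup.quotientKerEquivOfSurjective _ (cyclesToExt_surjective P Y A n)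

end ProjectiveResolution

theorem module_finite_asModule {k G V : Type*} [CommRing k] [Monoid G] [AddCommGroup V]
    [Module k V] (ρ : Representation k G V) [Module.Finite k V] :
    Module.Finite (MonoidAlgebra k G) ρ.asModule :=
  have : Module.Finite k ρ.asModule := ‹Module.Finite k V›
  .of_restrictScalars_finite k (MonoidAlgebra k G) ρ.asModule

section GroupCohomology

variable {k G : Type u} [CommRing k] [Group G]

/-- `Hⁿ(G, M) ≃ Extⁿ(k, M)` in `Rep k G`. In contrast to `groupCohomologyIsoExt`, the right hand
side is the `Ext` of the derived category, for which long exact sequences are available. -/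
noncomputable def groupCohomologyAddEquivExt [HasExt.{w} (Rep.{u} k G)] (M : Rep.{u} k G) (n : ℕ) :
    groupCohomology M n ≃+ Ext (Rep.trivial k G k) M n :=
  (groupCohomologyIso M n (projectiveResolution _)).toLinearEquiv.toAddEquiv.trans
    (homologyLinearYonedaObjAddEquivExt _ M k n)

theorem groupCohomology_finite_of_free_abelian_of_finite_general
    [IsNoetherianRing (MonoidAlgebra k G)] (M : Rep.{u} k G) [Finite M] (n : ℕ) :
    Finite (groupCohomology M n) := by
  have : HasExt.{u} (Rep.{u} k G) := hasExt_of_enoughProjectives _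
  let F : Rep.{u} k G ⥤ ModuleCat (MonoidAlgebra k G) := Rep.toModuleMonoidAlgebra
  have : F.Additive := ⟨rfl⟩
  have : Module.Finite (MonoidAlgebra k G) (F.obj (.trivial k G k)) :=
    module_finite_asModule (Rep.trivial k G k).ρ
  have : Finite (F.obj M) := ‹Finite M›
  have : Finite (Ext (F.obj (.trivial k G k)) (F.obj M) n) := finite_ext_of_module_finite _ _ n
  have : Finite (Ext (Rep.trivial k G k) M n) :=
    .of_injective _ (F.mapExt_bijective_of_preservesProjectiveObjects _ M n).injective
  exact .of_equiv _ (groupCohomologyAddEquivExt M n).symm.toEquiv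

end GroupCohomology

/-- Let `G = ℤ^d` be a finitely generated free abelian group (written multiplicatively)
and let `M` be a representation of `G` over `ℤ` whose underlying abelian group is finite
(a finite `G`-module).  Then the group cohomology `H^n(G, M)` is finite for every
`n ≥ 0` (Examples 5.4 and 5.6). -/
theorem groupCohomology_finite_of_free_abelian_of_finite (d : ℕ)
    (M : Rep ℤ (Multiplicative (Fin d → ℤ))) [Finite M] (n : ℕ) :
    Finite (groupCohomology M n) := by
  have : IsNoetherianRing (MonoidAlgebra ℤ (Multiplicative (Fin d → ℤ))) :=
    Algebra.FiniteType.isNoetherianRing ℤ _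
  exact groupCohomology_finite_of_free_abelian_of_finite_general M n
end
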